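/- Let S be a polynomial ring over a field, and I ⊆ S an ideal generated by c elements such that codim V(I) = c (so the generators form a regular sequence and S/I is a complete intersection). Suppose x₁, x₂ ∈ S satisfy codim V(I, x₁) ≥ c+1 and codim V(I, x₂) ≥ c+1, and (S/I)_{x₁x₂} is a domain. Then x₁x₂ is a non-zero divisor on S/I, S/I is a domain, and I : ⟨x₁x₂⟩^∞ = I. -/

import Mathlib

/-- The codimension of the vanishing locus `V(I)` in `Spec S`: the infimum of the
heights of the primes containing `I`. -/
noncomputable def codimV {S : Type*} [CommRing S] (I : Ideal S) : ℕ∞ :=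
  ⨅ p ∈ {p : PrimeSpectrum S | I ≤ p.asIdeal}, Order.height p


namespace CIAux
open IsLocalRing RingTheory.Sequence
open scoped Pointwise
universe u v

/-- `M` has a weakly regular sequence of length `k` in the maximal ideal. -/
def HasSeq (R : Type u) [CommRing R] [IsLocalRing R] (M : Type v) [AddCommGroup M] [Module R M]
    (k : ℕ) : Prop :=
  ∃ rs : List R, rs.length = k ∧ (∀ r ∈ rs, r ∈ maximalIdeal R) ∧ IsWeaklyRegular M rs

lemma mk_eq_zero_iff' {R : Type u} [CommRing R] {M : Type v} [AddCommGroup M] [Module R M] (a : R) (z : M) :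
    (Submodule.Quotient.mk z : QuotSMulTop a M) = 0 ↔ ∃ w, a • w = z := by
  rw [Submodule.Quotient.mk_eq_zero, Submodule.mem_smul_pointwise_iff_exists]
  simp

lemma kap {R : Type u} [CommRing R] {M : Type v} [AddCommGroup M] [Module R M] (m : Ideal R) {y a : R}
    (hy : IsSMulRegular M y) (ha : IsSMulRegular M a) (hym : y ∈ m)
    (h : ∀ z : QuotSMulTop y M, (∀ r ∈ m, r • z = 0) → z = 0) :
    ∀ z : QuotSMulTop a M, (∀ r ∈ m, r • z = 0) → z = 0 := by
  intro z hz
  obtain ⟨z, rfl⟩ := Submodule.Quotient.mk_surjective _ z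
  obtain ⟨w, hw⟩ := (mk_eq_zero_iff' a (y • z)).1 (hz y hym)
  have h0 : (Submodule.Quotient.mk w : QuotSMulTop y M) = 0 := by
    apply h
    intro r hr
    obtain ⟨t, ht⟩ := (mk_eq_zero_iff' a (r • z)).1 (hz r hr)
    refine (mk_eq_zero_iff' y (r • w)).2 ⟨t, ha ?_⟩
    simp only
    rw [smul_comm a y, ht, smul_comm a r, hw, smul_comm]
  obtain ⟨t, ht⟩ := (mk_eq_zero_iff' y w).1 h0
  refine (mk_eq_zero_iff' a z).2 ⟨t, hy ?_⟩
  simp only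
  rw [smul_comm, ht, hw]

variable {R : Type u} [CommRing R] [IsLocalRing R] [IsNoetherianRing R]

lemma exists_reg {N : Type v} [AddCommGroup N] [Module R N] [Module.Finite R N]
    (h : ∀ z : N, (∀ r ∈ maximalIdeal R, r • z = 0) → z = 0) :
    ∃ b ∈ maximalIdeal R, IsSMulRegular N b := by
  have := (IsSMulRegular.subsingleton_linearMap_iff (R := R) (M := N)
    (N := R ⧸ maximalIdeal R)).1 ?_
  · obtain ⟨r, hr, h⟩ := this
    rw [Ideal.annihilator_quotient] at hr
    exact ⟨r, hr, h⟩
  · refine subsingleton_of_forall_eq 0 fun f => ?_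
    ext
    apply h
    intro r hr
    simp only [LinearMap.coe_comp, Function.comp_apply]
    rw [← map_smul]
    convert map_zero f
    rw [← map_smul]
    simpa [Ideal.Quotient.eq_zero_iff_mem] using hr

lemma exchange (d : ℕ) : ∀ (M : Type v) [AddCommGroup M] [Module R M] [Module.Finite R M],
    HasSeq R M (d + 1) → ∀ a ∈ maximalIdeal R, IsSMulRegular M a → HasSeq R (QuotSMulTop a M) d := by
  induction d with
  | zero =>
    intro M _ _ _ _ a _ _
    exact ⟨[], rfl, by simp, .nil R _⟩
  | succ d ih =>
    intro M _ _ _ ⟨rs, hl, hm, hr⟩ a ham har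
    match rs, hl, hm, hr with
    | y :: y2 :: ys, hl, hm, hr =>
    have hym : y ∈ maximalIdeal R := hm y (by simp)
    have hy2m : y2 ∈ maximalIdeal R := hm y2 (by simp)
    have hr' := hr
    rw [isWeaklyRegular_cons_iff] at hr
    obtain ⟨hy, hys⟩ := hr
    have hy2 : IsSMulRegular (QuotSMulTop y M) y2 := ((isWeaklyRegular_cons_iff _ _ _).1 hys).1
    have h1 : ∀ z : QuotSMulTop y M, (∀ r ∈ maximalIdeal R, r • z = 0) → z = 0 :=
      fun z hz => hy2.right_eq_zero_of_smul (hz y2 hy2m)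
    have h2 := kap (maximalIdeal R) hy har hym h1
    obtain ⟨b, hbm, hb⟩ := exists_reg (R := R) (N := QuotSMulTop y M × QuotSMulTop a M) (by
      rintro ⟨z1, z2⟩ hz
      simp only [Prod.smul_mk, Prod.mk_eq_zero] at hz ⊢
      exact ⟨h1 z1 fun r hr => (hz r hr).1, h2 z2 fun r hr => (hz r hr).2⟩)
    have hb1 : IsSMulRegular (QuotSMulTop y M) b := by
      intro u v huv
      have := @hb (u, 0) (v, 0) (by simpa using huv)
      simpa using this
    have hb2 : IsSMulRegular (QuotSMulTop a M) b := by
      intro u v huv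
      have := @hb (0, u) (0, v) (by simpa using huv)
      simpa using this
    obtain ⟨zs, hzl, hzm, hz⟩ := ih (QuotSMulTop y M)
      ⟨y2 :: ys, by simpa using hl, fun r hr => hm r (List.mem_cons_of_mem _ hr), hys⟩ b hbm hb1
    have w1 : IsWeaklyRegular M (y :: b :: zs) := .cons hy (.cons hb1 hz)
    have w2 : IsWeaklyRegular M (b :: y :: zs) :=
      isWeaklyRegular_of_perm_of_subset_maximalIdeal w1 (List.Perm.swap _ _ _) (by
        simp only [List.mem_cons]; rintro r (rfl | rfl | h)
        exacts [hym, hbm, hzm _ h])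
    rw [isWeaklyRegular_cons_iff] at w2
    have w3 : IsWeaklyRegular M [a, b] := .cons har (.cons hb2 (.nil _ _))
    have w4 : IsWeaklyRegular M [b, a] :=
      isWeaklyRegular_of_perm_of_subset_maximalIdeal w3 (List.Perm.swap _ _ _) (by
        simp only [List.mem_cons]; rintro r (rfl | rfl | h)
        exacts [ham, hbm, by simp at h])
    rw [isWeaklyRegular_cons_iff, isWeaklyRegular_singleton_iff] at w4
    obtain ⟨ws, hwl, hwm, hw⟩ := ih (QuotSMulTop b M) ⟨y :: zs, by simp [hzl], by
        simp only [List.mem_cons]; rintro r (rfl | h)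
        exacts [hym, hzm _ h], w2.2⟩ a ham w4.2
    have w5 : IsWeaklyRegular M (b :: a :: ws) := .cons w4.1 (.cons w4.2 hw)
    have w6 : IsWeaklyRegular M (a :: b :: ws) :=
      isWeaklyRegular_of_perm_of_subset_maximalIdeal w5 (List.Perm.swap _ _ _) (by
        simp only [List.mem_cons]; rintro r (rfl | rfl | h)
        exacts [hbm, ham, hwm _ h])
    exact ⟨b :: ws, by simp [hwl], by
        simp only [List.mem_cons]; rintro r (rfl | h)
        exacts [hbm, hwm _ h], ((isWeaklyRegular_cons_iff _ _ _).1 w6).2⟩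

lemma le_dim_of_ass (k : ℕ) : ∀ (M : Type v) [AddCommGroup M] [Module R M] [Module.Finite R M],
    HasSeq R M k → ∀ p : Ideal R, IsAssociatedPrime p M → (k : WithBot ℕ∞) ≤ ringKrullDim (R ⧸ p) := by
  induction k with
  | zero =>
    intro M _ _ _ _ p hp
    have := hp.isPrime
    simpa using ringKrullDim_nonneg_of_nontrivial (R := R ⧸ p)
  | succ k ih =>
    intro M _ _ _ ⟨rs, hl, hm, hr⟩ p hp
    match rs, hl, hm, hr with
    | y :: ys, hl, hm, hr =>
    have hym : y ∈ maximalIdeal R := hm y (by simp)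
    rw [isWeaklyRegular_cons_iff] at hr
    obtain ⟨hy, hys⟩ := hr
    obtain ⟨hpp, x, hx⟩ := isAssociatedPrime_iff.1 hp
    have hx0 : x ≠ 0 := by
      rintro rfl
      exact hpp.ne_top (by rw [hx]; simp)
    have hpx : ∀ r, r ∈ p ↔ r • x = 0 := fun r => by
      rw [hx, Submodule.mem_colon_singleton]; simp
    let N : Submodule R M := Submodule.torsionBySet R M (p : Set R)
    have hN : ∀ z, z ∈ N ↔ ∀ r ∈ p, r • z = 0 := fun z => by
      simp [N, Submodule.mem_torsionBySet_iff]
    have hex : ∃ z ∈ N, (Submodule.Quotient.mk z : QuotSMulTop y M) ≠ 0 := by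
      by_contra! hcon
      have : N = ⊥ := by
        refine Submodule.eq_bot_of_le_smul_of_le_jacobson_bot (maximalIdeal R) N
          (IsNoetherian.noetherian N) ?_ (maximalIdeal_le_jacobson _)
        intro z hz
        obtain ⟨w, rfl⟩ := (mk_eq_zero_iff' y z).1 (hcon z hz)
        refine Submodule.smul_mem_smul hym ((hN w).2 fun r hr => ?_)
        apply hy.right_eq_zero_of_smul
        rw [smul_comm]
        exact (hN _).1 hz r hr
      apply hx0
      rw [← Submodule.mem_bot R, ← this, hN]
      exact fun r hr => (hpx r).1 hr
    obtain ⟨z, hzN, hz0⟩ := hex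
    obtain ⟨q, hq, hle⟩ := exists_le_isAssociatedPrime_of_isNoetherianRing R _ hz0
    have hmem : ∀ r : R, r • (Submodule.Quotient.mk z : QuotSMulTop y M) = 0 → r ∈ q := by
      intro r hr
      apply hle
      rw [Submodule.mem_colon_singleton]; simpa using hr
    have hpq : p ≤ q := fun r hr => hmem r (by
      rw [← Submodule.Quotient.mk_smul, (hN z).1 hzN r hr]; rfl)
    have hyq : y ∈ q := hmem y ((mk_eq_zero_iff' y (y • z)).2 ⟨z, rfl⟩)
    have hyp : y ∉ p := fun h => hx0 (hy.right_eq_zero_of_smul ((hpx y).1 h))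
    have h1 := ih (QuotSMulTop y M) ⟨ys, by simpa using hl,
      fun r hr => hm r (List.mem_cons_of_mem _ hr), hys⟩ q hq
    have h2 := ringKrullDim_succ_le_of_surjective (Ideal.Quotient.factor hpq)
      (Ideal.Quotient.factor_surjective hpq) (r := Ideal.Quotient.mk p y)
      (mem_nonZeroDivisors_of_ne_zero (by rwa [Ne, Ideal.Quotient.eq_zero_iff_mem]))
      (by simpa [Ideal.Quotient.eq_zero_iff_mem] using hyq)
    push_cast
    exact (add_le_add_left h1 1).trans h2

lemma dim_quot_le (as : List R) :
    ∀ (M : Type v) [AddCommGroup M] [Module R M] [Module.Finite R M],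
    (∀ a ∈ as, a ∈ maximalIdeal R) →
    Module.supportDim R M ≤
      Module.supportDim R (M ⧸ (Ideal.ofList as • ⊤ : Submodule R M)) + as.length := by
  induction as with
  | nil =>
    intro M _ _ _ _
    simp only [List.length_nil, Nat.cast_zero, add_zero]
    refine (Module.supportDim_eq_of_equiv (Submodule.quotEquivOfEqBot _ ?_).symm).le
    rw [Ideal.ofList_nil, Submodule.bot_smul]
  | cons a as ih =>
    intro M _ _ _ hm
    rw [Module.supportDim_eq_of_equiv (Submodule.quotOfListConsSMulTopEquivQuotSMulTopInner M a as)]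
    have h1 := ih (QuotSMulTop a M) fun r hr => hm r (List.mem_cons_of_mem _ hr)
    have h2 := Module.supportDim_le_supportDim_quotSMulTop_succ (R := R) (M := M)
      (hm a (by simp))
    refine h2.trans ((add_le_add_left h1 1).trans ?_)
    simp [add_assoc]

lemma main_local (e : ℕ) (as : List R) :
    ∀ (M : Type v) [AddCommGroup M] [Module R M] [Module.Finite R M],
    (∀ a ∈ as, a ∈ maximalIdeal R) → HasSeq R M (e + as.length) →
    Module.supportDim R (M ⧸ (Ideal.ofList as • ⊤ : Submodule R M)) ≤ e →
    HasSeq R (M ⧸ (Ideal.ofList as • ⊤ : Submodule R M)) e := by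
  induction as with
  | nil =>
    rintro M _ _ _ _ ⟨rs, hl, hm, h⟩ _
    refine ⟨rs, by simpa using hl, hm, ?_⟩
    refine (LinearEquiv.isWeaklyRegular_congr (Submodule.quotEquivOfEqBot _ ?_) rs).2 h
    rw [Ideal.ofList_nil, Submodule.bot_smul]
  | cons a as ih =>
    intro M _ _ _ hm hs hdim
    let eq := Submodule.quotOfListConsSMulTopEquivQuotSMulTopInner M a as
    rw [Module.supportDim_eq_of_equiv eq] at hdim
    have hm' : ∀ r ∈ as, r ∈ maximalIdeal R := fun r hr => hm r (List.mem_cons_of_mem _ hr)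
    have h1 := dim_quot_le as (QuotSMulTop a M) hm'
    have h2 : Module.supportDim R (QuotSMulTop a M) ≤ ((e + as.length : ℕ) : WithBot ℕ∞) := by
      push_cast
      exact h1.trans (add_le_add_left hdim _)
    have ham := hm a (by simp)
    have har : IsSMulRegular M a := by
      by_contra hcon
      have : a ∈ ⋃ p ∈ associatedPrimes R M, (p : Set R) := by
        rw [biUnion_associatedPrimes_eq_compl_regular]; exact hcon
      simp only [Set.mem_iUnion, exists_prop] at this
      obtain ⟨p, hp, hap⟩ := this
      have h3 := le_dim_of_ass _ M hs p hp
      have hpp := hp.isPrime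
      have h4 : (⟨p, hpp⟩ : PrimeSpectrum R) ∈ Module.support R (QuotSMulTop a M) := by
        rw [Module.support_quotSMulTop]
        refine ⟨?_, by simpa using hap⟩
        rw [Module.support_eq_zeroLocus]
        have := hp.annihilator_le
        rwa [Submodule.annihilator_top] at this
      rw [Module.support_eq_zeroLocus] at h4
      have h5 : Module.annihilator R (QuotSMulTop a M) ≤ p := h4
      rw [Module.supportDim_eq_ringKrullDim_quotient_annihilator] at h2
      have h6 := ringKrullDim_le_of_surjective (Ideal.Quotient.factor h5)
        (Ideal.Quotient.factor_surjective h5)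
      have h7 := h3.trans (h6.trans h2)
      have h8 : e + (as.length + 1) ≤ e + as.length := by exact_mod_cast h7
      omega
    obtain ⟨rs, hl, hrm, h⟩ := ih (QuotSMulTop a M) hm' (exchange _ M hs a ham har) hdim
    exact ⟨rs, hl, hrm, (eq.isWeaklyRegular_congr rs).2 h⟩

lemma withBot_cancel {a b : WithBot ℕ∞} (h : a + 1 ≤ b + 1) : a ≤ b := by
  exact ENat.WithBot.add_le_add_natCast_right_iff.mp h

lemma reg_domain (d : ℕ) : ∀ (R : Type u) [CommRing R] [IsLocalRing R] [IsNoetherianRing R]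
    (s : Finset R), maximalIdeal R = Ideal.span s → s.card ≤ d →
    (d : WithBot ℕ∞) ≤ ringKrullDim R → IsDomain R ∧ HasSeq R R d := by
  classical
  induction d with
  | zero =>
    intro R _ _ _ s hs hc _
    have : s = ∅ := by simpa using hc
    subst this
    have hf : IsField R := isField_iff_maximalIdeal_eq.2 (by simpa using hs)
    exact ⟨hf.isDomain, [], rfl, by simp, .nil R _⟩
  | succ d ih =>
    intro R _ _ _ s hs hc hdim
    have hmin : maximalIdeal R ∉ minimalPrimes R := by
      intro h
      rw [← maximalIdeal_height_eq_ringKrullDim, Ideal.height_eq_zero_iff.2 h] at hdim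
      have : d + 1 ≤ 0 := by exact_mod_cast hdim
      omega
    have hx : ∃ x ∈ maximalIdeal R, x ∉ (maximalIdeal R) ^ 2 ∧ ∀ q ∈ minimalPrimes R, x ∉ q := by
      by_contra! hcon
      have := (Ideal.subset_union_prime_finite (s := insert (maximalIdeal R ^ 2) (minimalPrimes R))
        ((minimalPrimes.finite_of_isNoetherianRing R).insert _)
        (f := id) (maximalIdeal R ^ 2) (maximalIdeal R ^ 2) (I := maximalIdeal R) (by
          rintro i (rfl | hi) h1 h2
          · exact absurd rfl h1
          · exact hi.1.1)).1 (by
          intro x hx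
          simp only [Set.mem_iUnion, exists_prop, id]
          by_cases h2 : x ∈ maximalIdeal R ^ 2
          · exact ⟨_, Or.inl rfl, h2⟩
          · obtain ⟨q, hq, h⟩ := hcon x hx h2
            exact ⟨q, Or.inr hq, h⟩)
      obtain ⟨q, rfl | hq, hle⟩ := this
      · apply hmin
        have h0 : maximalIdeal R = ⊥ := by
          refine Submodule.eq_bot_of_le_smul_of_le_jacobson_bot (maximalIdeal R) (maximalIdeal R)
            (IsNoetherian.noetherian _) ?_ (maximalIdeal_le_jacobson _)
          simpa [pow_two] using hle
        have hp : (maximalIdeal R).IsPrime := inferInstance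
        exact ⟨⟨hp, bot_le⟩, fun q hq hle => by rw [h0]; exact bot_le⟩
      · apply hmin
        have : q = maximalIdeal R := le_antisymm (le_maximalIdeal hq.1.1.ne_top) hle
        rwa [← this]
    obtain ⟨x, hxm, hx2, hxq⟩ := hx
    have hxs : x ∈ Ideal.span (s : Set R) := hs ▸ hxm
    obtain ⟨f, hf⟩ := (Submodule.mem_span_finset' ).1 hxs
    obtain ⟨t, hts, htu⟩ : ∃ t : s, True ∧ f t ∉ maximalIdeal R := by
      by_contra! hcon
      apply hx2
      rw [← hf]
      refine Ideal.sum_mem _ fun t _ => ?_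
      rw [pow_two]
      exact Ideal.mul_mem_mul (hcon t trivial) (hs ▸ Ideal.subset_span t.2)
    have hu : IsUnit (f t) := by simpa using htu
    have hgen : maximalIdeal R ≤ Ideal.span (insert x (s.erase t : Finset R) : Set R) := by
      rw [hs, Ideal.span_le]
      intro r hr
      have hsub : ∀ r ∈ s, r ≠ t → r ∈ Ideal.span (insert x (s.erase t : Finset R) : Set R) :=
        fun r hr hrt => Ideal.subset_span (Or.inr (by simp [hr, hrt]))
      by_cases hrt : r = t
      · subst hrt
        have h1 : f t * t ∈ Ideal.span (insert x (s.erase t : Finset R) : Set R) := by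
          rw [← Finset.add_sum_erase _ _ (Finset.mem_univ t)] at hf
          rw [smul_eq_mul, ← eq_sub_iff_add_eq] at hf
          rw [hf]
          refine Ideal.sub_mem _ (Ideal.subset_span (Or.inl rfl)) (Ideal.sum_mem _ fun i hi => ?_)
          refine Ideal.mul_mem_left _ _ (hsub _ i.2 fun h => ?_)
          exact (Finset.mem_erase.1 hi).1 (Subtype.ext h)
        exact (Ideal.unit_mul_mem_iff_mem _ hu).1 h1
      · exact hsub r hr hrt
    let J : Ideal R := Ideal.span {x}
    have hJ : J ≤ maximalIdeal R := by simpa [J, Ideal.span_le] using hxm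
    have hJt : J ≠ ⊤ := fun h => (maximalIdeal.isMaximal R).ne_top (top_le_iff.1 (h ▸ hJ))
    have : Nontrivial (R ⧸ J) := Ideal.Quotient.nontrivial_iff.2 hJt
    have : IsLocalRing (R ⧸ J) := .of_surjective' (Ideal.Quotient.mk J) Ideal.Quotient.mk_surjective
    have hloc : ∀ r : R, Ideal.Quotient.mk J r ∈ maximalIdeal (R ⧸ J) ↔ r ∈ maximalIdeal R := by
      intro r
      have : IsLocalHom (Ideal.Quotient.mk J) :=
        .of_surjective _ Ideal.Quotient.mk_surjective
      simp only [mem_maximalIdeal, mem_nonunits_iff, isUnit_map_iff]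
    have hgen' : maximalIdeal (R ⧸ J) =
        Ideal.span (((s.erase t).image (Ideal.Quotient.mk J) : Finset (R ⧸ J)) : Set (R ⧸ J)) := by
      apply le_antisymm
      · intro z hz
        obtain ⟨r, rfl⟩ := Ideal.Quotient.mk_surjective z
        have h1 := Ideal.mem_map_of_mem (Ideal.Quotient.mk J) (hgen ((hloc r).1 hz))
        rw [Ideal.map_span, Set.image_insert_eq] at h1
        have h0 : Ideal.Quotient.mk J x = 0 :=
          Ideal.Quotient.eq_zero_iff_mem.2 (Ideal.mem_span_singleton_self x)
        rw [h0] at h1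
        simpa [Ideal.span_insert] using h1
      · rw [Ideal.span_le]
        intro z hz
        obtain ⟨r, hr, rfl⟩ := Finset.mem_image.1 hz
        exact (hloc r).2 (hs ▸ Ideal.subset_span (Finset.mem_of_mem_erase hr))
    have hdim' : (d : WithBot ℕ∞) ≤ ringKrullDim (R ⧸ J) := by
      have h1 := ringKrullDim_le_ringKrullDim_quotient_add_encard ({x} : Set R)
        (by simpa [IsLocalRing.ringJacobson_eq_maximalIdeal] using hxm)
      rw [Set.encard_singleton] at h1
      apply withBot_cancel
      have := hdim.trans h1
      push_cast at this
      exact this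
    obtain ⟨hD, rs, hl, hrm, hr⟩ := ih (R ⧸ J) _ hgen' (by
      refine Finset.card_image_le.trans ?_
      rw [Finset.card_erase_of_mem t.2]; omega) hdim'
    have hJp : J.IsPrime := (Ideal.Quotient.isDomain_iff_prime J).1 hD
    obtain ⟨q, hq, hqJ⟩ := Ideal.exists_minimalPrimes_le (I := ⊥) (J := J) bot_le
    have hxq' : x ∉ q := hxq q hq
    have hqp : q.IsPrime := hq.1.1
    have hq0 : q = ⊥ := by
      refine Submodule.eq_bot_of_le_smul_of_le_jacobson_bot (maximalIdeal R) q
        (IsNoetherian.noetherian _) ?_ (maximalIdeal_le_jacobson _)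
      intro z hz
      obtain ⟨w, rfl⟩ := Ideal.mem_span_singleton'.1 (hqJ hz)
      rw [mul_comm]
      refine Submodule.smul_mem_smul hxm ((hqp.mem_or_mem hz).resolve_right hxq')
    have hdomR : IsDomain R := by
      rw [hq0] at hqp
      exact (IsDomain.of_bot_isPrime R)
    refine ⟨hdomR, ?_⟩
    obtain ⟨rs', rfl⟩ := (List.map_surjective_iff.2 (Ideal.Quotient.mk_surjective (I := J))) rs
    have hx0 : x ≠ 0 := fun h => hxq' (h ▸ q.zero_mem)
    refine ⟨x :: rs', by simpa using hl, ?_, ?_⟩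
    · simp only [List.mem_cons]; rintro r (rfl | h)
      exacts [hxm, (hloc r).1 (hrm _ (List.mem_map_of_mem h))]
    · refine .cons (fun a b hab => mul_left_cancel₀ hx0 hab) ?_
      have h1 : IsWeaklyRegular (R ⧸ J) rs' :=
        (isWeaklyRegular_map_algebraMap_iff (R ⧸ J) (R ⧸ J) rs').1 hr
      refine (LinearEquiv.isWeaklyRegular_congr (Submodule.quotEquivOfEq _ _ ?_) rs').2 h1
      rw [Submodule.ideal_span_singleton_smul x (⊤ : Submodule R R) |>.symm]
      simp [J]

lemma dim_quotient_le {R : Type u} [CommRing R] (J : Ideal R) (e c : ℕ)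
    (hdim : ringKrullDim R ≤ ((e + c : ℕ) : WithBot ℕ∞))
    (h : ∀ q : PrimeSpectrum R, J ≤ q.asIdeal → (c : ℕ∞) ≤ Order.height q) :
    ringKrullDim (R ⧸ J) ≤ e := by
  rw [ringKrullDim_quotient]
  refine iSup_le fun l => ?_
  obtain ⟨r, hr, hrl⟩ := Order.exists_series_of_le_height l.head.1 (h l.head.1 l.head.2)
  let l' : LTSeries (PrimeSpectrum R) := l.map Subtype.val (fun _ _ h => h)
  have h1 := Order.LTSeries.length_le_krullDim (r.smash l' (by rw [hr]; rfl))
  have h2 := h1.trans hdim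
  have h3 : r.length + l.length ≤ e + c := by exact_mod_cast h2
  have h4 : l.length ≤ e := by omega
  exact_mod_cast h4

lemma unmixed {S : Type u} [CommRing S] [IsRegularRing S] (as : List S)
    (h : ∀ q : Ideal S, q.IsPrime → Ideal.ofList as ≤ q → (as.length : ℕ∞) ≤ q.height)
    (p : Ideal S) (hp : IsAssociatedPrime p (S ⧸ Ideal.ofList as)) : p.height ≤ as.length := by
  obtain ⟨hpp, z, hz⟩ := isAssociatedPrime_iff.1 hp
  obtain ⟨z, rfl⟩ := Ideal.Quotient.mk_surjective z
  set I := Ideal.ofList as with hI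
  have hpz : ∀ r, r ∈ p ↔ r * z ∈ I := fun r => by
    rw [hz, Submodule.mem_colon_singleton, Submodule.mem_bot, ← Ideal.Quotient.eq_zero_iff_mem,
      map_mul]
    rfl
  have hIp : I ≤ p := fun r hr => (hpz r).2 (Ideal.mul_mem_right _ _ hr)
  let R := Localization.AtPrime p
  have hcp := h p hpp hIp
  have hfin : p.height ≠ ⊤ := Ideal.height_ne_top_of_isPrime
  obtain ⟨n, hn⟩ := ENat.ne_top_iff_exists.1 hfin
  rw [← hn] at hcp ⊢
  have hcn : as.length ≤ n := by exact_mod_cast hcp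
  obtain ⟨e, rfl⟩ := Nat.exists_eq_add_of_le' hcn
  have hdimR : ringKrullDim R = ((e + as.length : ℕ) : WithBot ℕ∞) := by
    rw [IsLocalization.AtPrime.ringKrullDim_eq_height p R, ← hn]; rfl
  have hreg := (isRegularLocalRing_iff R).1 inferInstance
  rw [hdimR] at hreg
  have hreg' : (maximalIdeal R).spanFinrank = e + as.length := by exact_mod_cast hreg
  have hfg : (maximalIdeal R).FG := IsNoetherian.noetherian _
  have hseq : HasSeq R R (e + as.length) := by
    refine (reg_domain _ R (Submodule.FG.finite_generators hfg).toFinset ?_ ?_ hdimR.ge).2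
    · rw [Set.Finite.coe_toFinset]
      exact ((maximalIdeal R).span_generators).symm
    · rw [← Set.ncard_eq_toFinset_card _ (Submodule.FG.finite_generators hfg), Submodule.FG.generators_ncard hfg, hreg']
  let as' := as.map (algebraMap S R)
  have hmap : Ideal.ofList as' = I.map (algebraMap S R) := by
    rw [hI, Ideal.map_ofList]
  have hpm : p.map (algebraMap S R) = maximalIdeal R := Localization.AtPrime.map_eq_maximalIdeal
  have hJ : (Ideal.ofList as' • ⊤ : Submodule R R) = I.map (algebraMap S R) := by
    rw [hmap]; simp
  have hdimJ : ringKrullDim (R ⧸ I.map (algebraMap S R)) ≤ e := by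
    refine dim_quotient_le _ e as.length hdimR.le fun q hq => ?_
    have h1 := h (q.asIdeal.under S) inferInstance (Ideal.map_le_iff_le_comap.1 hq)
    rwa [IsLocalization.height_under p.primeCompl, PrimeSpectrum.height_eq_orderHeight] at h1
  have hm : ∀ a ∈ as', a ∈ maximalIdeal R := by
    intro a ha
    rw [← hpm]
    apply Ideal.map_mono hIp
    rw [← hmap]
    exact Ideal.subset_span ha
  obtain ⟨rs, hl, hrm, hr⟩ := main_local e as' R hm (by simpa [as'] using hseq) (by
    rw [hJ, Module.supportDim_quotient_eq_ringKrullDim]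
    exact hdimJ)
  match rs, hl with
  | [], hl =>
    simp only [List.length_nil] at hl
    subst hl
    simp
  | y :: ys, hl =>
    exfalso
    have hy := ((isWeaklyRegular_cons_iff _ _ _).1 hr).1
    rw [hJ] at hy
    have hy' := (isSMulRegular_quotient_iff_mem_of_smul_mem _ _).1 hy (algebraMap S R z) ?_
    · rw [IsLocalization.algebraMap_mem_map_algebraMap_iff p.primeCompl] at hy'
      obtain ⟨m, hm, hmz⟩ := hy'
      exact hm ((hpz m).2 hmz)
    · have hyp : y ∈ p.map (algebraMap S R) := hpm ▸ hrm y (by simp)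
      have hle : p.map (algebraMap S R) ≤
          Submodule.comap (LinearMap.mulRight R (algebraMap S R z)) (I.map (algebraMap S R)) := by
        rw [Ideal.map, Ideal.span, Submodule.span_le]
        rintro _ ⟨r, hr, rfl⟩
        have := Ideal.mem_map_of_mem (algebraMap S R) ((hpz r).1 hr)
        simpa using this
      exact hle hyp
end CIAux

/-- Let `S` be a polynomial ring over a field and `I ⊆ S` an ideal generated
by `c` elements with `codim V(I) = c` (a complete intersection).  Suppose
`codim V(I, x₁) ≥ c+1`, `codim V(I, x₂) ≥ c+1`, and `(S/I)_{x₁x₂}` is a domain.  Then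
`x₁x₂` is a non-zero divisor on `S/I`, `S/I` is a domain (i.e. `I` is prime), and
`I : ⟨x₁x₂⟩^∞ = I`. -/
theorem stmt5 (K : Type) [Field K] (n : ℕ) (c : ℕ)
    (I : Ideal (MvPolynomial (Fin n) K))
    (hgen : ∃ g : Fin c → MvPolynomial (Fin n) K, I = Ideal.span (Set.range g))
    (hcodim : codimV I = (c : ℕ∞))
    (x₁ x₂ : MvPolynomial (Fin n) K)
    (hx₁ : ((c : ℕ∞) + 1) ≤ codimV (I ⊔ Ideal.span {x₁}))
    (hx₂ : ((c : ℕ∞) + 1) ≤ codimV (I ⊔ Ideal.span {x₂}))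
    (hdom : IsDomain (Localization.Away (Ideal.Quotient.mk I (x₁ * x₂)))) :
    (Ideal.Quotient.mk I (x₁ * x₂)) ∈
        nonZeroDivisors (MvPolynomial (Fin n) K ⧸ I) ∧
      I.IsPrime ∧
      (∀ p : MvPolynomial (Fin n) K, (∃ N : ℕ, (x₁ * x₂) ^ N * p ∈ I) → p ∈ I) := by
  obtain ⟨g, hg⟩ := hgen
  have hI : I = Ideal.ofList (List.ofFn g) := by
    rw [hg]
    refine congrArg Ideal.span (Set.ext fun x => ?_)
    simp [List.mem_ofFn]
  have hle : ∀ (J : Ideal (MvPolynomial (Fin n) K)) (q : Ideal (MvPolynomial (Fin n) K)),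
      q.IsPrime → J ≤ q → codimV J ≤ q.height := by
    intro J q hq hJq
    have := PrimeSpectrum.height_eq_orderHeight (⟨q, hq⟩ : PrimeSpectrum (MvPolynomial (Fin n) K))
    rw [show q.height = _ from this]
    exact iInf₂_le (⟨q, hq⟩ : PrimeSpectrum (MvPolynomial (Fin n) K)) hJq
  have hass : ∀ p : Ideal (MvPolynomial (Fin n) K), IsAssociatedPrime p (MvPolynomial (Fin n) K ⧸ I) → p.height ≤ c := by
    intro p hp
    have := CIAux.unmixed (List.ofFn g) (by
      intro q hq hIq
      rw [List.length_ofFn, ← hcodim]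
      exact hle I q hq (hI.le.trans hIq)) p (by rw [← hI]; exact hp)
    simpa using this
  have key : ∀ x, ((c : ℕ∞) + 1) ≤ codimV (I ⊔ Ideal.span {x}) →
      ∀ y, x * y ∈ I → y ∈ I := by
    intro x hx y hxy
    by_contra hy
    have hy0 : Ideal.Quotient.mk I y ≠ 0 := by rwa [Ne, Ideal.Quotient.eq_zero_iff_mem]
    obtain ⟨p, hp, hyp⟩ := exists_le_isAssociatedPrime_of_isNoetherianRing
      (MvPolynomial (Fin n) K) _ hy0
    have hmem : ∀ r, r * y ∈ I → r ∈ p := fun r hr => hyp (by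
      rw [Submodule.mem_colon_singleton, Submodule.mem_bot]
      exact Ideal.Quotient.eq_zero_iff_mem.2 hr)
    have h1 : I ⊔ Ideal.span {x} ≤ p := sup_le
      (fun r hr => hmem r (Ideal.mul_mem_right _ _ hr))
      ((Ideal.span_singleton_le_iff_mem _).2 (hmem x hxy))
    have h2 := (hx.trans (hle _ p hp.isPrime h1)).trans (hass p hp)
    have h3 : c + 1 ≤ c := by exact_mod_cast h2
    omega
  have key2 : ∀ y, x₁ * x₂ * y ∈ I → y ∈ I := fun y hy =>
    key x₂ hx₂ y (key x₁ hx₁ _ (by rwa [← mul_assoc]))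
  have hnzd : (Ideal.Quotient.mk I (x₁ * x₂)) ∈
      nonZeroDivisors (MvPolynomial (Fin n) K ⧸ I) := by
    rw [mem_nonZeroDivisors_iff_right]
    intro y hy
    obtain ⟨y, rfl⟩ := Ideal.Quotient.mk_surjective y
    rw [← map_mul, Ideal.Quotient.eq_zero_iff_mem] at hy
    rw [Ideal.Quotient.eq_zero_iff_mem]
    exact key2 y (by rwa [mul_comm])
  refine ⟨hnzd, ?_, ?_⟩
  · rw [← Ideal.Quotient.isDomain_iff_prime]
    have hinj := IsLocalization.injective (Localization.Away (Ideal.Quotient.mk I (x₁ * x₂)))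
      (M := Submonoid.powers (Ideal.Quotient.mk I (x₁ * x₂))) (by
        rw [Submonoid.powers_le]; exact hnzd)
    exact hinj.isDomain
  · rintro p ⟨N, hN⟩
    induction N with
    | zero => simpa using hN
    | succ N ih =>
      apply ih
      apply key2
      rwa [← mul_assoc, ← pow_succ']
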